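/- arXiv:2511.00907 — 8 statements merged into one kernel-verified Lean document; each statement's English description precedes it below -/
import Mathlib

section
/- Let N ≥ 1, let T > 0, let E : Fin N → ℝ, and let Z = Σ_i exp(-E i / T). If p : Fin N → ℝ is a probability vector with p i > 0 for all i and Σ_i p i = 1, and its free energy attains the minimum value, i.e. Σ_i p i * E i + T * Σ_i p i * log (p i) = -T * log Z, then p is the Boltzmann distribution: p i = exp(-E i / T) / Z for every i. -/
/-!
This is the equality case of Gibbs' inequality. Let `q i = exp (-E i / T) / Z`. The bound
`log x ≤ x - 1` at `x = q i / p i`, multiplied by `p i`, shows that each gap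
`q i - p i - p i * log (q i / p i)` is nonnegative. Since `p` and `q` both have total mass one,
the gaps add up to the relative entropy `∑ i, p i * log (p i / q i)`, which is the excess free
energy of `p` over `-T * log Z`, divided by `T`. That excess is zero, so every gap vanishes, and
strictness of `log x < x - 1` for `x ≠ 1` forces `q i = p i`.
-/

/-- **Uniqueness of the free-energy minimizer.**
If a strictly positive probability vector `p` attains the minimum free energy
`-T * log Z`, then `p` is the Boltzmann distribution `p i = exp(-E i / T) / Z`. -/
theorem free_energy_min_imp_boltzmann (N : ℕ) (hN : 1 ≤ N) (T : ℝ) (hT : 0 < T)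
    (E : Fin N → ℝ) (Z : ℝ) (hZ : Z = ∑ i, Real.exp (-E i / T))
    (p : Fin N → ℝ) (hp : ∀ i, 0 < p i) (hsum : ∑ i, p i = 1)
    (hmin : ∑ i, p i * E i + T * ∑ i, p i * Real.log (p i) = -T * Real.log Z) :
    ∀ i, p i = Real.exp (-E i / T) / Z := by
  have hZpos : 0 < Z := by
    rw [hZ]
    exact Finset.sum_pos (fun i _ => Real.exp_pos _) ⟨⟨0, hN⟩, Finset.mem_univ _⟩
  have hqpos : ∀ i, 0 < Real.exp (-E i / T) / Z := fun i => div_pos (Real.exp_pos _) hZpos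
  have hqsum : ∑ i, Real.exp (-E i / T) / Z = 1 := by
    rw [← Finset.sum_div, ← hZ, div_self hZpos.ne']
  have hlog : ∀ i, Real.log (Real.exp (-E i / T) / Z / p i)
      = -E i / T - Real.log Z - Real.log (p i) := fun i => by
    rw [Real.log_div (hqpos i).ne' (hp i).ne', Real.log_div (Real.exp_pos _).ne' hZpos.ne',
      Real.log_exp]
  have hmul : ∀ i, p i * (Real.exp (-E i / T) / Z / p i - 1) = Real.exp (-E i / T) / Z - p i :=
    fun i => by rw [mul_sub, mul_div_cancel₀ _ (hp i).ne', mul_one]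
  have hnonneg : ∀ i ∈ Finset.univ, 0 ≤ Real.exp (-E i / T) / Z - p i
      - p i * Real.log (Real.exp (-E i / T) / Z / p i) := fun i _ => by
    rw [← hmul i, sub_nonneg]
    exact mul_le_mul_of_nonneg_left
      (Real.log_le_sub_one_of_pos (div_pos (hqpos i) (hp i))) (hp i).le
  have hkl : ∑ i, p i * Real.log (Real.exp (-E i / T) / Z / p i) = 0 := by
    have hterm : ∀ i, p i * Real.log (Real.exp (-E i / T) / Z / p i)
        = -(p i * E i) / T - p i * Real.log Z - p i * Real.log (p i) := fun i => by
      rw [hlog]; ring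
    simp_rw [hterm]
    rw [Finset.sum_sub_distrib, Finset.sum_sub_distrib, ← Finset.sum_div, ← Finset.sum_mul,
      hsum, Finset.sum_neg_distrib]
    field_simp
    linarith
  have hgap : ∑ i, (Real.exp (-E i / T) / Z - p i
      - p i * Real.log (Real.exp (-E i / T) / Z / p i)) = 0 := by
    rw [Finset.sum_sub_distrib, Finset.sum_sub_distrib, hqsum, hsum, hkl]
    norm_num
  intro i
  have hi := (Finset.sum_eq_zero_iff_of_nonneg hnonneg).1 hgap i (Finset.mem_univ i)
  by_contra hne
  have hratio : Real.exp (-E i / T) / Z / p i ≠ 1 := fun h =>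
    hne ((div_eq_one_iff_eq (hp i).ne').1 h).symm
  have hlt := mul_lt_mul_of_pos_left
    (Real.log_lt_sub_one_of_pos (div_pos (hqpos i) (hp i)) hratio) (hp i)
  rw [hmul i] at hlt
  linarith
end

section
/- Let z and a_1, …, a_N be vectors in the Euclidean space ℝ^d, let T > 0 and ρ > 0, and suppose ‖z‖ ≤ ρ and ‖a_i‖ ≤ ρ for every i ∈ {1,…,N}. Then -T * log (Σ_i exp(-‖z - a_i‖² / (2T))) ≤ -T * log (Σ_i exp(⟨z, a_i⟩ / T)) + ρ². -/
open RealInnerProductSpace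

/-- **Free energy upper bound inside the ball.**
If `‖z‖ ≤ ρ` and `‖a i‖ ≤ ρ` for all `i`, then the Helmholtz free energy with
elastic-potential energies is at most the one with inner-product energies plus `ρ²`. -/
theorem free_energy_ball_le (d N : ℕ) (hN : 1 ≤ N) (T ρ : ℝ) (hT : 0 < T) (hρ : 0 < ρ)
    (z : EuclideanSpace ℝ (Fin d)) (a : Fin N → EuclideanSpace ℝ (Fin d))
    (hz : ‖z‖ ≤ ρ) (ha : ∀ i, ‖a i‖ ≤ ρ) :
    -T * Real.log (∑ i, Real.exp (-‖z - a i‖ ^ 2 / (2 * T))) ≤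
      -T * Real.log (∑ i, Real.exp (⟪z, a i⟫ / T)) + ρ ^ 2 := by
  -- Expanding the square, `-‖z - aᵢ‖² / 2 = ⟪z, aᵢ⟫ - (‖z‖² + ‖aᵢ‖²) / 2 ≥ ⟪z, aᵢ⟫ - ρ²`,
  -- so each elastic Boltzmann weight is at least `exp (-ρ² / T)` times the inner-product one.
  have key : ∀ i, Real.exp (-(ρ ^ 2 / T)) * Real.exp (⟪z, a i⟫ / T) ≤
      Real.exp (-‖z - a i‖ ^ 2 / (2 * T)) := by
    intro i
    rw [← Real.exp_add, Real.exp_le_exp, norm_sub_sq_real]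
    have h1 : ‖z‖ ^ 2 ≤ ρ ^ 2 := by gcongr
    have h2 : ‖a i‖ ^ 2 ≤ ρ ^ 2 := by gcongr; exact ha i
    have e : -(ρ ^ 2 / T) + ⟪z, a i⟫ / T = (2 * ⟪z, a i⟫ - 2 * ρ ^ 2) / (2 * T) := by
      field_simp
      ring
    rw [e]
    gcongr
    linarith
  have hne : (Finset.univ : Finset (Fin N)).Nonempty := ⟨⟨0, hN⟩, Finset.mem_univ _⟩
  have hpos : 0 < ∑ i, Real.exp (⟪z, a i⟫ / T) :=
    Finset.sum_pos (fun i _ => Real.exp_pos _) hne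
  have hsum : Real.exp (-(ρ ^ 2 / T)) * ∑ i, Real.exp (⟪z, a i⟫ / T) ≤
      ∑ i, Real.exp (-‖z - a i‖ ^ 2 / (2 * T)) := by
    rw [Finset.mul_sum]
    exact Finset.sum_le_sum fun i _ => key i
  have hlog := Real.log_le_log (mul_pos (Real.exp_pos _) hpos) hsum
  rw [Real.log_mul (Real.exp_pos _).ne' hpos.ne', Real.log_exp] at hlog
  have hmul := mul_le_mul_of_nonneg_left hlog hT.le
  rw [mul_add, mul_neg, mul_div_cancel₀ _ hT.ne'] at hmul
  linarith
end

section
/- Let W be a d × d real matrix, h_1, …, h_N ∈ ℝ^d, T > 0, and η > 0. Define the Helmholtz free energy F̃*(z) = -T * log (Σ_i exp(⟨z, W h_i⟩ / T)) on Euclidean ℝ^d. Then for every z ∈ ℝ^d, one gradient descent step on F̃* with learning rate η equals the output of a residual softmax attention layer: z - η ∇F̃*(z) = z + Σ_i [exp(⟨z, W h_i⟩/T) / (Σ_j exp(⟨z, W h_j⟩/T))] · (η W) h_i. In particular, this is the standard attention output Atten(z) = z + Σ_i softmax_i(z^T W_Q^T W_K h / T) W_V h_i when W_Q^T W_K = W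 and W_V = η W. -/
/-!
The gradient of `-T log ∑ i exp(⟪z, v i⟫ / T)` is minus the softmax-weighted average of the `v i`
(`hasGradientAt_freeEnergy`). With `v i = W h i`, a descent step therefore adds `η` times that
average to `z`, and `η` is absorbed into the value matrix because `matVec` is linear in the matrix
(`matVec_smul`).
-/

open RealInnerProductSpace

/-- The action of a `d × d` real matrix on a vector of Euclidean `ℝ^d`. -/
noncomputable def matVec {d : ℕ} (W : Matrix (Fin d) (Fin d) ℝ)
    (v : EuclideanSpace ℝ (Fin d)) : EuclideanSpace ℝ (Fin d) :=
  (EuclideanSpace.equiv (Fin d) ℝ).symm (W.mulVec (EuclideanSpace.equiv (Fin d) ℝ v))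

/-- Log-sum-exp chain rule: the gradient of the free energy with energies `-⟪z, v i⟫` is minus
the softmax average of the `v i`. The factor `-T` cancels the `1 / T` coming from the exponents;
nonemptiness of the index set makes the partition function positive. -/
theorem hasGradientAt_freeEnergy {d N : ℕ} (hN : 1 ≤ N) {T : ℝ} (hT : 0 < T)
    (v : Fin N → EuclideanSpace ℝ (Fin d)) (z : EuclideanSpace ℝ (Fin d)) :
    HasGradientAt
      (fun z : EuclideanSpace ℝ (Fin d) => -T * Real.log (∑ i, Real.exp (⟪z, v i⟫ / T)))
      (-∑ i, (Real.exp (⟪z, v i⟫ / T) / ∑ j, Real.exp (⟪z, v j⟫ / T)) • v i) z := by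
  have : Nonempty (Fin N) := ⟨⟨0, hN⟩⟩
  have hpos : 0 < ∑ j, Real.exp (⟪z, v j⟫ / T) :=
    Finset.sum_pos (fun _ _ => Real.exp_pos _) Finset.univ_nonempty
  have hinner : ∀ i, HasFDerivAt (fun z : EuclideanSpace ℝ (Fin d) => ⟪z, v i⟫ / T)
      (T⁻¹ • innerSL ℝ (v i)) z := by
    intro i
    have := ((innerSL ℝ (v i)).hasFDerivAt (x := z)).const_mul T⁻¹
    refine this.congr_of_eventuallyEq (Filter.Eventually.of_forall fun y => ?_)
    simp [real_inner_comm, div_eq_inv_mul]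
  have hlog := ((HasFDerivAt.fun_sum (u := Finset.univ)
    (fun i _ => (hinner i).exp)).log hpos.ne').const_mul (-T)
  rw [hasGradientAt_iff_hasFDerivAt]
  refine hlog.congr_fderiv ?_
  ext y
  simp only [smul_apply, sum_apply, innerSL_apply_apply,
    InnerProductSpace.toDual_apply_apply, inner_neg_left, sum_inner, real_inner_smul_left,
    smul_eq_mul, Finset.mul_sum, ← Finset.sum_neg_distrib]
  refine Finset.sum_congr rfl fun i _ => ?_
  field_simp

theorem matVec_smul {d : ℕ} (c : ℝ) (W : Matrix (Fin d) (Fin d) ℝ)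
    (v : EuclideanSpace ℝ (Fin d)) : matVec (c • W) v = c • matVec W v := by
  simp [matVec, Matrix.smul_mulVec]

/-- **Softmax attention as a gradient descent step on the Helmholtz free energy.**
For `F̃*(z) = -T log ∑ i exp(⟪z, W h i⟫ / T)`, one gradient descent step with
learning rate `η` equals the output of a residual softmax attention layer with
`W_Qᵀ W_K = W` and `W_V = η W`. -/
theorem attention_eq_gradient_step (d N : ℕ) (hN : 1 ≤ N) (T η : ℝ) (hT : 0 < T) (hη : 0 < η)
    (W WQ WK WV : Matrix (Fin d) (Fin d) ℝ) (h : Fin N → EuclideanSpace ℝ (Fin d))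
    (hQK : WQ.transpose * WK = W) (hV : WV = η • W) (z : EuclideanSpace ℝ (Fin d)) :
    z - η • gradient
        (fun z : EuclideanSpace ℝ (Fin d) =>
          -T * Real.log (∑ i, Real.exp (⟪z, matVec W (h i)⟫ / T))) z
      = z + ∑ i,
          (Real.exp (⟪z, matVec W (h i)⟫ / T) / ∑ j, Real.exp (⟪z, matVec W (h j)⟫ / T))
            • matVec WV (h i) := by
  rw [(hasGradientAt_freeEnergy hN hT (fun i => matVec W (h i)) z).gradient, hV]
  simp only [matVec_smul, smul_neg, sub_neg_eq_add, Finset.smul_sum]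
  congr 1
  exact Finset.sum_congr rfl fun i _ => smul_comm _ _ _
end

section
/- Let W be a d × d real matrix, h_1, …, h_N ∈ ℝ^d, T > 0, and η > 0. Define F*(z) = -(T/2) * Σ_i (⟨z, W h_i⟩)² on Euclidean ℝ^d. Then F* is differentiable with gradient ∇F*(z) = -T Σ_i ⟨z, W h_i⟩ · (W h_i), and one gradient descent step with learning rate η equals the output of a residual linear attention layer: z - η ∇F*(z) = z + Σ_i ⟨z, W h_i⟩ · (η T W) h_i. In particular this is LinearAtten(z) = z + Σ_i (z^T W_Q^T W_K h_i) W_V h_i when W_Q^T W_K = W and W_V = η T W. -/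
/-!
The energy is `-T/2` times a sum of squares of the linear functionals `z ↦ ⟪z, W h i⟫`, so the
chain rule gives its derivative `y ↦ -T ∑ i ⟪z, W h i⟫ ⟪W h i, y⟫`, which the Riesz isomorphism
identifies with the stated gradient. The descent step then matches the attention layer because
`matVec` is homogeneous in the matrix (`matVec_smul`).
-/

open RealInnerProductSpace

/-- **Linear attention as a gradient descent step.**
For `F*(z) = -(T/2) ∑ i ⟪z, W h i⟫²`, the gradient is
`-T ∑ i ⟪z, W h i⟫ • (W h i)`, and one gradient descent step with learning rate
`η` equals a residual linear attention layer with `W_Qᵀ W_K = W`, `W_V = η T W`. -/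
theorem linear_attention_eq_gradient_step (d N : ℕ) (T η : ℝ) (hT : 0 < T) (hη : 0 < η)
    (W WQ WK WV : Matrix (Fin d) (Fin d) ℝ) (h : Fin N → EuclideanSpace ℝ (Fin d))
    (hQK : WQ.transpose * WK = W) (hV : WV = (η * T) • W) (z : EuclideanSpace ℝ (Fin d)) :
    HasGradientAt
        (fun z : EuclideanSpace ℝ (Fin d) => -(T / 2) * ∑ i, ⟪z, matVec W (h i)⟫ ^ 2)
        (-(T • ∑ i, ⟪z, matVec W (h i)⟫ • matVec W (h i))) z ∧
      z - η • (-(T • ∑ i, ⟪z, matVec W (h i)⟫ • matVec W (h i)))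
        = z + ∑ i, ⟪z, matVec W (h i)⟫ • matVec WV (h i) := by
  constructor
  · rw [hasGradientAt_iff_hasFDerivAt]
    have hlin : ∀ v : EuclideanSpace ℝ (Fin d),
        HasFDerivAt (fun z : EuclideanSpace ℝ (Fin d) => ⟪z, v⟫) (innerSL ℝ v) z := by
      intro v
      simp only [real_inner_comm v]
      exact (innerSL ℝ v).hasFDerivAt
    have hsum := (HasFDerivAt.fun_sum (u := Finset.univ)
      fun i _ => (hlin (matVec W (h i))).pow 2).const_mul (-(T / 2))
    refine hsum.congr_fderiv ?_
    ext y
    -- Both functionals send `y` to `-T ∑ i ⟪z, W h i⟫ ⟪W h i, y⟫`.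
    simp [Finset.mul_sum, ← Finset.sum_neg_distrib]
    refine Finset.sum_congr rfl fun i _ => ?_
    ring
  · simp only [hV, matVec_smul, smul_neg, sub_neg_eq_add, Finset.smul_sum, smul_smul]
    congr 1
    refine Finset.sum_congr rfl fun i _ => ?_
    congr 1
    ring
end

section
/- Let W be a d × d real matrix, h_1, …, h_N ∈ ℝ^d, γ_1, …, γ_N ∈ ℝ, T > 0, and η > 0. Define the gated global energy F*(z) = -(T/2) * Σ_i γ_i (⟨z, W h_i⟩)² on Euclidean ℝ^d. Then F* is differentiable with gradient ∇F*(z) = -T Σ_i γ_i ⟨z, W h_i⟩ · (W h_i), and one gradient descent step with learning rate η equals the output of a residual gated linear attention layer: z - η ∇F*(z) = z + Σ_i γ_i ⟨z, W h_i⟩ · (η T W) h_i. -/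
/-!
With `w i = W h i`, each `z ↦ ⟪z, w i⟫` is linear, with Riesz representative `w i`. The chain rule
gives `γ i * ⟪z, w i⟫ ^ 2` the gradient `2 γ i ⟪z, w i⟫ • w i`, and multiplying the sum by `-(T / 2)`
cancels the factor `2`. The gradient-step identity is then linear algebra: `η * T` moves inside
the sum.
-/

open RealInnerProductSpace

/-- **Gated linear attention as a gradient descent step.**
For the gated global energy `F*(z) = -(T/2) ∑ i γ i ⟪z, W h i⟫²`, the gradient
is `-T ∑ i γ i ⟪z, W h i⟫ • (W h i)`, and one gradient descent step with
learning rate `η` equals a residual gated linear attention layer. -/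
theorem gated_linear_attention_eq_gradient_step (d N : ℕ) (T η : ℝ) (hT : 0 < T) (hη : 0 < η)
    (W : Matrix (Fin d) (Fin d) ℝ) (h : Fin N → EuclideanSpace ℝ (Fin d))
    (γ : Fin N → ℝ) (z : EuclideanSpace ℝ (Fin d)) :
    HasGradientAt
        (fun z : EuclideanSpace ℝ (Fin d) => -(T / 2) * ∑ i, γ i * ⟪z, matVec W (h i)⟫ ^ 2)
        (-(T • ∑ i, (γ i * ⟪z, matVec W (h i)⟫) • matVec W (h i))) z ∧
      z - η • (-(T • ∑ i, (γ i * ⟪z, matVec W (h i)⟫) • matVec W (h i)))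
        = z + ∑ i, (γ i * ⟪z, matVec W (h i)⟫) • ((η * T) • matVec W (h i)) := by
  set w : Fin N → EuclideanSpace ℝ (Fin d) := fun i => matVec W (h i) with hw
  change HasGradientAt (fun z : EuclideanSpace ℝ (Fin d) => -(T / 2) * ∑ i, γ i * ⟪z, w i⟫ ^ 2)
      (-(T • ∑ i, (γ i * ⟪z, w i⟫) • w i)) z ∧
    z - η • (-(T • ∑ i, (γ i * ⟪z, w i⟫) • w i)) =
      z + ∑ i, (γ i * ⟪z, w i⟫) • ((η * T) • w i)
  constructor
  · rw [hasGradientAt_iff_hasFDerivAt]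
    have hlin : ∀ i, HasFDerivAt (fun z : EuclideanSpace ℝ (Fin d) => ⟪z, w i⟫)
        (innerSL ℝ (w i)) z := fun i =>
      (innerSL ℝ (w i)).hasFDerivAt.congr_of_eventuallyEq
        (.of_forall fun y => real_inner_comm (w i) y)
    have key := (HasFDerivAt.fun_sum (u := Finset.univ)
      fun i _ => ((hlin i).pow 2).const_mul (γ i)).const_mul (-(T / 2))
    refine key.congr_fderiv ?_
    ext v
    simp only [smul_apply, sum_apply,
      innerSL_apply_apply, InnerProductSpace.toDual_apply_apply, inner_neg_left,
      real_inner_smul_left, sum_inner, smul_eq_mul, Finset.mul_sum, ← Finset.sum_neg_distrib]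
    refine Finset.sum_congr rfl fun i _ => ?_
    norm_num
    ring
  · rw [smul_neg, sub_neg_eq_add, smul_smul, Finset.smul_sum]
    simp only [smul_comm (η * T)]
end

section
/- Let H ≥ 1 and for each h ∈ {1,…,H} let M_h be a d × d real matrix (playing the role of W_{1,h}^T W_{2,h}), let h_1, …, h_N ∈ ℝ^d, T > 0, η > 0. Define the average Helmholtz free energy F̃*(z) = -(1/H) Σ_{h=1}^H T * log (Σ_{i=1}^N exp(⟨z, M_h h_i⟩ / T)) on Euclidean ℝ^d. Then F̃* is differentiable with gradient ∇F̃*(z) = -(1/H) Σ_h Σ_i p_{i,h}(z) M_h h_i, where p_{i,h}(z) = exp(⟨z, M_h h_i⟩/T) / (Σ_j exp(⟨z, M_h h_j⟩/T)), and one gradient descent step with learning rate η equals the multi-head attention output: z - η ∇F̃*(z) = z + Σ_h Σ_i p_{i,h}(z) · (η/H) M_h h_i, i.e. the output MHA(z) = z + Σ_h Σ_i p_{i,h}(z) W_{O,h} W_{V,h} h_i when W_{O,h} W_{V,h} = (η/H) M_h for every head h. -/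
/-! Each head contributes a log-sum-exp function of the linear forms `⟪z, M k (h i)⟫`, whose gradient
is the softmax average of the vectors `M k (h i)` (`hasGradientAt_logSumExp`). Averaging over the
heads gives the gradient of the free energy, and the gradient step is then the attention output
after moving the scalar `η / H` inside the sums. -/

open RealInnerProductSpace

/-- The gradient of the (negated) single-head free energy `T log ∑ i, exp (⟪z, v i⟫ / T)` is the
softmax average of the keys `v i`: the factor `T` cancels the `1 / T` from the chain rule. The index
type must be nonempty so that the logarithm is taken at a positive number. -/
lemma hasGradientAt_logSumExp {E ι : Type*} [NormedAddCommGroup E] [InnerProductSpace ℝ E]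
    [CompleteSpace E] [Fintype ι] [Nonempty ι] {T : ℝ} (hT : T ≠ 0) (v : ι → E) (z : E) :
    HasGradientAt (fun z : E => T * Real.log (∑ i, Real.exp (⟪z, v i⟫ / T)))
      (∑ i, (Real.exp (⟪z, v i⟫ / T) / ∑ j, Real.exp (⟪z, v j⟫ / T)) • v i) z := by
  have hpos : 0 < ∑ j, Real.exp (⟪z, v j⟫ / T) :=
    Finset.sum_pos (fun _ _ => Real.exp_pos _) Finset.univ_nonempty
  have hexp : ∀ i, HasFDerivAt (fun z : E => Real.exp (⟪z, v i⟫ / T))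
      (Real.exp (⟪z, v i⟫ / T) • (T⁻¹ • innerSL ℝ (v i))) z := by
    intro i
    have hlin : HasFDerivAt (fun z : E => ⟪z, v i⟫ / T) (T⁻¹ • innerSL ℝ (v i)) z := by
      refine ((innerSL ℝ (v i)).hasFDerivAt.const_smul T⁻¹).congr_of_eventuallyEq
        (.of_forall fun y => ?_)
      simp [real_inner_comm, div_eq_inv_mul]
    exact hlin.exp
  have hsum := HasFDerivAt.fun_sum (u := Finset.univ) fun i _ => hexp i
  rw [hasGradientAt_iff_hasFDerivAt]
  refine ((hsum.log hpos.ne').const_mul T).congr_fderiv ?_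
  ext y
  simp only [smul_apply, sum_apply, innerSL_apply_apply,
    InnerProductSpace.toDual_apply_apply, sum_inner, real_inner_smul_left, smul_eq_mul,
    Finset.mul_sum]
  refine Finset.sum_congr rfl fun i _ => ?_
  field_simp

/-- **Multi-head attention as a gradient descent step on the average Helmholtz
free energy.**  For `F̃*(z) = -(1/H) ∑ h T log ∑ i exp(⟪z, M h • h i⟫ / T)`, the
gradient is `-(1/H) ∑ h ∑ i p i h (z) • (M h • h i)`, and one gradient descent
step with learning rate `η` equals the residual multi-head attention output
with `W_{O,h} W_{V,h} = (η/H) M h`. -/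
theorem multihead_attention_eq_gradient_step (d N H : ℕ) (hH : 1 ≤ H) (hN : 1 ≤ N)
    (T η : ℝ) (hT : 0 < T) (hη : 0 < η)
    (M : Fin H → Matrix (Fin d) (Fin d) ℝ) (h : Fin N → EuclideanSpace ℝ (Fin d))
    (z : EuclideanSpace ℝ (Fin d)) :
    HasGradientAt
        (fun z : EuclideanSpace ℝ (Fin d) =>
          -(1 / (H : ℝ)) * ∑ k, T * Real.log (∑ i, Real.exp (⟪z, matVec (M k) (h i)⟫ / T)))
        (-((1 / (H : ℝ)) • ∑ k, ∑ i,
            (Real.exp (⟪z, matVec (M k) (h i)⟫ / T) /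
                ∑ j, Real.exp (⟪z, matVec (M k) (h j)⟫ / T))
              • matVec (M k) (h i))) z ∧
      z - η • (-((1 / (H : ℝ)) • ∑ k, ∑ i,
            (Real.exp (⟪z, matVec (M k) (h i)⟫ / T) /
                ∑ j, Real.exp (⟪z, matVec (M k) (h j)⟫ / T))
              • matVec (M k) (h i)))
        = z + ∑ k, ∑ i,
            (Real.exp (⟪z, matVec (M k) (h i)⟫ / T) /
                ∑ j, Real.exp (⟪z, matVec (M k) (h j)⟫ / T))
              • ((η / (H : ℝ)) • matVec (M k) (h i)) := by
  have : Nonempty (Fin N) := ⟨⟨0, hN⟩⟩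
  constructor
  · have hsum := HasFDerivAt.fun_sum (u := Finset.univ) fun k _ =>
      (hasGradientAt_logSumExp hT.ne' (fun i => matVec (M k) (h i)) z).hasFDerivAt
    rw [hasGradientAt_iff_hasFDerivAt]
    refine (hsum.const_mul (-(1 / (H : ℝ)))).congr_fderiv ?_
    simp only [map_neg, map_smul, map_sum, neg_smul]
  · simp only [smul_neg, sub_neg_eq_add, Finset.smul_sum, smul_smul]
    congr 1
    refine Finset.sum_congr rfl fun k _ => Finset.sum_congr rfl fun i _ => ?_
    congr 1
    ring
end

section
/- Let a_1, …, a_N ∈ ℝ^d and T > 0, and let F*(z) = -T * log (Σ_i exp(-‖z - a_i‖² / (2T))). Then F* is twice continuously differentiable and its second derivative at z, as a bilinear form, is given for all u, v ∈ ℝ^d by D²F*(z)(u, v) = ⟨u, v⟩ - (1/T) [ Σ_i q_i(z) ⟨r_i, u⟩⟨r_i, v⟩ - (Σ_i q_i(z) ⟨r_i, u⟩)(Σ_i q_i(z) ⟨r_i, v⟩) ], where r_i = z - a_i and q_i(z) = exp(-‖z - a_i‖²/(2T)) / (Σ_j exp(-‖z - a_j‖²/(2T))). In other words, the Hessian of F*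 is the identity minus 1/T times the weighted covariance matrix of the residuals r_i under the weights q_i(z). -/
/-!
Write `wᵢ(z) = exp(-‖z - aᵢ‖²/(2T))` and `S = ∑ wᵢ > 0`. Since `D wᵢ(z) = -(1/T) wᵢ(z) ⟪z - aᵢ, ·⟫`,
the chain rule for `-T log S` shows that `DF*(z) v = (∑ wᵢ(z) ⟪z - aᵢ, v⟫) / S(z)`, the mean residual
under the softmax weights (`fderiv_freeEnergyElastic_apply`). The Hessian follows by differentiating
the identity `S(z) · DF*(z) v = ∑ wᵢ(z) ⟪z - aᵢ, v⟫` in direction `u` and dividing by `S(z)`: the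
derivative of the inner products gives `⟪u, v⟫`, and the derivatives of the `wᵢ` and of `S` give the
two terms of the covariance.
-/

open RealInnerProductSpace

/-- The elastic-potential Helmholtz free energy
`F*(z) = -T log ∑ i exp(-‖z - a i‖²/(2T))`. -/
noncomputable def freeEnergyElastic {d N : ℕ} (T : ℝ) (a : Fin N → EuclideanSpace ℝ (Fin d))
    (z : EuclideanSpace ℝ (Fin d)) : ℝ :=
  -T * Real.log (∑ i, Real.exp (-‖z - a i‖ ^ 2 / (2 * T)))

/-- The distance-softmax weights
`q i (z) = exp(-‖z - a i‖²/(2T)) / ∑ j exp(-‖z - a j‖²/(2T))`. -/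
noncomputable def distSoftmaxWeight {d N : ℕ} (T : ℝ) (a : Fin N → EuclideanSpace ℝ (Fin d))
    (z : EuclideanSpace ℝ (Fin d)) (i : Fin N) : ℝ :=
  Real.exp (-‖z - a i‖ ^ 2 / (2 * T)) / ∑ j, Real.exp (-‖z - a j‖ ^ 2 / (2 * T))

/-- The Boltzmann factor `exp(-‖z - c‖²/(2T))` has gradient `-(1/T) exp(-‖z - c‖²/(2T)) (z - c)`. -/
lemma hasFDerivAt_boltzmann {d : ℕ} (T : ℝ) (c z : EuclideanSpace ℝ (Fin d)) :
    HasFDerivAt (fun z => Real.exp (-‖z - c‖ ^ 2 / (2 * T)))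
      ((-(1 / T) * Real.exp (-‖z - c‖ ^ 2 / (2 * T))) • innerSL ℝ (z - c)) z := by
  have h := (((((hasFDerivAt_id z).sub_const c).norm_sq).neg).mul_const (2 * T)⁻¹).exp
  simp only [id, ← div_eq_mul_inv] at h
  refine h.congr_fderiv ?_
  ext v
  simp
  ring

/-- The partition function is positive because the index set is nonempty. -/
lemma partition_pos {d N : ℕ} (hN : 1 ≤ N) (T : ℝ) (a : Fin N → EuclideanSpace ℝ (Fin d))
    (z : EuclideanSpace ℝ (Fin d)) : 0 < ∑ i, Real.exp (-‖z - a i‖ ^ 2 / (2 * T)) :=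
  Finset.sum_pos (fun _ _ => Real.exp_pos _) ⟨⟨0, hN⟩, Finset.mem_univ _⟩

lemma hasFDerivAt_partition {d N : ℕ} (T : ℝ) (a : Fin N → EuclideanSpace ℝ (Fin d))
    (z : EuclideanSpace ℝ (Fin d)) :
    HasFDerivAt (fun z => ∑ i, Real.exp (-‖z - a i‖ ^ 2 / (2 * T)))
      (∑ i, (-(1 / T) * Real.exp (-‖z - a i‖ ^ 2 / (2 * T))) • innerSL ℝ (z - a i)) z :=
  HasFDerivAt.fun_sum fun i _ => hasFDerivAt_boltzmann T (a i) z

/-- The gradient of the free energy is the softmax-weighted mean residual. -/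
lemma fderiv_freeEnergyElastic_apply {d N : ℕ} (hN : 1 ≤ N) {T : ℝ} (hT : 0 < T)
    (a : Fin N → EuclideanSpace ℝ (Fin d)) (z v : EuclideanSpace ℝ (Fin d)) :
    fderiv ℝ (freeEnergyElastic T a) z v =
      (∑ i, Real.exp (-‖z - a i‖ ^ 2 / (2 * T)) * ⟪z - a i, v⟫) /
        ∑ i, Real.exp (-‖z - a i‖ ^ 2 / (2 * T)) := by
  have h : HasFDerivAt (freeEnergyElastic T a) _ z :=
    ((hasFDerivAt_partition T a z).log (partition_pos hN T a z).ne').const_mul (-T)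
  rw [h.fderiv]
  simp only [smul_apply, sum_apply, innerSL_apply_apply,
    smul_eq_mul, mul_assoc, ← Finset.mul_sum]
  field_simp

lemma contDiff_freeEnergyElastic {d N : ℕ} (hN : 1 ≤ N) (T : ℝ)
    (a : Fin N → EuclideanSpace ℝ (Fin d)) : ContDiff ℝ 2 (freeEnergyElastic T a) := by
  refine contDiff_const.mul (ContDiff.log (ContDiff.sum fun i _ => ?_)
    fun z => (partition_pos hN T a z).ne')
  exact (((contDiff_id.sub contDiff_const).norm_sq ℝ).neg.div_const _).exp

/-- **Second derivative of the elastic-potential Helmholtz free energy.**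
`F*` is twice continuously differentiable and its second derivative at `z` is
`D²F*(z)(u,v) = ⟪u,v⟫ - (1/T)[∑ q i ⟨r i,u⟩⟨r i,v⟩ - (∑ q i ⟨r i,u⟩)(∑ q i ⟨r i,v⟩)]`
with residuals `r i = z - a i`: the Hessian is the identity minus `1/T` times
the weighted covariance of the residuals. -/
theorem free_energy_elastic_second_deriv (d N : ℕ) (hN : 1 ≤ N) (T : ℝ) (hT : 0 < T)
    (a : Fin N → EuclideanSpace ℝ (Fin d)) :
    ContDiff ℝ 2 (freeEnergyElastic T a) ∧
      ∀ z u v : EuclideanSpace ℝ (Fin d),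
        fderiv ℝ (fderiv ℝ (freeEnergyElastic T a)) z u v =
          ⟪u, v⟫ - (1 / T) *
            ((∑ i, distSoftmaxWeight T a z i * (⟪z - a i, u⟫ * ⟪z - a i, v⟫))
              - (∑ i, distSoftmaxWeight T a z i * ⟪z - a i, u⟫)
                * (∑ i, distSoftmaxWeight T a z i * ⟪z - a i, v⟫)) := by
  refine ⟨contDiff_freeEnergyElastic hN T a, fun z u v => ?_⟩
  have hd : DifferentiableAt ℝ (fderiv ℝ (freeEnergyElastic T a)) z :=
    ((contDiff_freeEnergyElastic hN T a).fderiv_right (m := 1) (by norm_num)).differentiable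
      (by norm_num) z
  have hg := hd.hasFDerivAt.clm_apply (hasFDerivAt_const v z)
  -- Differentiating `S · DF(·)v = ∑ wᵢ ⟪· - aᵢ, v⟫` avoids the quotient rule.
  have hS := hasFDerivAt_partition T a z
  have hM : HasFDerivAt
      (fun z => ∑ i, Real.exp (-‖z - a i‖ ^ 2 / (2 * T)) * ⟪z - a i, v⟫) _ z :=
    HasFDerivAt.fun_sum fun i _ => (hasFDerivAt_boltzmann T (a i) z).mul
      (((hasFDerivAt_id z).sub_const (a i)).inner ℝ (hasFDerivAt_const v z))
  have heq : (fun z => (∑ i, Real.exp (-‖z - a i‖ ^ 2 / (2 * T))) *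
      fderiv ℝ (freeEnergyElastic T a) z v) =
      fun z => ∑ i, Real.exp (-‖z - a i‖ ^ 2 / (2 * T)) * ⟪z - a i, v⟫ := by
    funext y
    rw [fderiv_freeEnergyElastic_apply hN hT, mul_div_cancel₀ _ (partition_pos hN T a y).ne']
  have hP := hS.fun_mul hg
  rw [heq] at hP
  have key := DFunLike.congr_fun (hP.unique hM) u
  have key' : (∑ i, Real.exp (-‖z - a i‖ ^ 2 / (2 * T))) *
        fderiv ℝ (fderiv ℝ (freeEnergyElastic T a)) z u v +
      fderiv ℝ (freeEnergyElastic T a) z v *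
        (-(1 / T) * ∑ i, Real.exp (-‖z - a i‖ ^ 2 / (2 * T)) * ⟪z - a i, u⟫) =
      (∑ i, Real.exp (-‖z - a i‖ ^ 2 / (2 * T))) * ⟪u, v⟫ + -(1 / T) *
        ∑ i, Real.exp (-‖z - a i‖ ^ 2 / (2 * T)) * (⟪z - a i, u⟫ * ⟪z - a i, v⟫) := by
    simp only [add_apply, smul_apply, sum_apply, innerSL_apply_apply, smul_eq_mul,
      ContinuousLinearMap.comp_apply, zero_apply, map_zero, zero_add,
      ContinuousLinearMap.flip_apply, ContinuousLinearMap.prod_apply, fderivInnerCLM_apply,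
      ContinuousLinearMap.id_apply, inner_zero_right] at key
    simp only [Finset.mul_sum, Finset.sum_mul, ← Finset.sum_add_distrib] at key ⊢
    convert key using 2
    · ring
    · ring
  rw [fderiv_freeEnergyElastic_apply hN hT] at key'
  have hpos := partition_pos hN T a z
  simp only [distSoftmaxWeight, div_mul_eq_mul_div, ← Finset.sum_div]
  generalize (∑ i, Real.exp (-‖z - a i‖ ^ 2 / (2 * T))) = S at *
  generalize fderiv ℝ (fderiv ℝ (freeEnergyElastic T a)) z u v = D at *
  apply mul_left_cancel₀ hpos.ne'
  rw [eq_sub_of_add_eq key']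
  field_simp
  ring
end

section
/- Let m ≤ n, let W be an m × n real matrix such that W W^T is invertible, and let C be an invertible m × m real matrix. Set M = W^T C W (an n × n matrix) and N = W^T (W W^T)^{-1} C^{-1} (W W^T)^{-1} W. Then N is the Moore–Penrose pseudoinverse of M; that is, N satisfies the four Penrose conditions: M N M = M, N M N = N, (M N)^T = M N, and (N M)^T = N M. -/
/-!
With `G = W Wᵀ`, both products `M B` and `B M` collapse to `P = Wᵀ G⁻¹ W`, the orthogonal
projection onto the row space of `W`. It is symmetric because `G` is, and `P Wᵀ = Wᵀ` gives
`P M = M` and `P B = B`; these are the four Penrose conditions.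
-/

open Matrix

/-- **Range-space formula for the Moore–Penrose pseudoinverse.**
For an `m × n` real matrix `W` (`m ≤ n`) with `W Wᵀ` invertible and an
invertible `m × m` matrix `C`, the matrix
`B = Wᵀ (W Wᵀ)⁻¹ C⁻¹ (W Wᵀ)⁻¹ W` is the Moore–Penrose pseudoinverse of
`M = Wᵀ C W`: it satisfies the four Penrose conditions. -/
theorem range_space_pseudoinverse (m n : ℕ) (hmn : m ≤ n)
    (W : Matrix (Fin m) (Fin n) ℝ) (C : Matrix (Fin m) (Fin m) ℝ)
    (hW : IsUnit (W * Wᵀ)) (hC : IsUnit C) :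
    (Wᵀ * C * W) * (Wᵀ * (W * Wᵀ)⁻¹ * C⁻¹ * (W * Wᵀ)⁻¹ * W) * (Wᵀ * C * W)
        = Wᵀ * C * W ∧
      (Wᵀ * (W * Wᵀ)⁻¹ * C⁻¹ * (W * Wᵀ)⁻¹ * W) * (Wᵀ * C * W)
          * (Wᵀ * (W * Wᵀ)⁻¹ * C⁻¹ * (W * Wᵀ)⁻¹ * W)
        = Wᵀ * (W * Wᵀ)⁻¹ * C⁻¹ * (W * Wᵀ)⁻¹ * W ∧
      ((Wᵀ * C * W) * (Wᵀ * (W * Wᵀ)⁻¹ * C⁻¹ * (W * Wᵀ)⁻¹ * W))ᵀ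
        = (Wᵀ * C * W) * (Wᵀ * (W * Wᵀ)⁻¹ * C⁻¹ * (W * Wᵀ)⁻¹ * W) ∧
      ((Wᵀ * (W * Wᵀ)⁻¹ * C⁻¹ * (W * Wᵀ)⁻¹ * W) * (Wᵀ * C * W))ᵀ
        = (Wᵀ * (W * Wᵀ)⁻¹ * C⁻¹ * (W * Wᵀ)⁻¹ * W) * (Wᵀ * C * W) := by
  have hGd := (Matrix.isUnit_iff_isUnit_det _).1 hW
  have hCd := (Matrix.isUnit_iff_isUnit_det _).1 hC
  have hGsymm : (W * Wᵀ)ᵀ = W * Wᵀ := by simp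
  have hPsymm : (Wᵀ * (W * Wᵀ)⁻¹ * W)ᵀ = Wᵀ * (W * Wᵀ)⁻¹ * W := by
    rw [transpose_mul, transpose_mul, transpose_nonsing_inv, hGsymm, transpose_transpose,
      Matrix.mul_assoc]
  have hPW : Wᵀ * (W * Wᵀ)⁻¹ * W * Wᵀ = Wᵀ := by
    rw [Matrix.mul_assoc _ W, Matrix.mul_assoc, nonsing_inv_mul _ hGd, Matrix.mul_one]
  have hMB : (Wᵀ * C * W) * (Wᵀ * (W * Wᵀ)⁻¹ * C⁻¹ * (W * Wᵀ)⁻¹ * W)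
      = Wᵀ * (W * Wᵀ)⁻¹ * W := by
    calc _ = Wᵀ * (C * ((W * Wᵀ) * (W * Wᵀ)⁻¹) * C⁻¹) * (W * Wᵀ)⁻¹ * W := by
          simp only [Matrix.mul_assoc]
      _ = _ := by rw [mul_nonsing_inv _ hGd, Matrix.mul_one, mul_nonsing_inv _ hCd, Matrix.mul_one]
  have hBM : (Wᵀ * (W * Wᵀ)⁻¹ * C⁻¹ * (W * Wᵀ)⁻¹ * W) * (Wᵀ * C * W)
      = Wᵀ * (W * Wᵀ)⁻¹ * W := by
    calc _ = Wᵀ * (W * Wᵀ)⁻¹ * (C⁻¹ * ((W * Wᵀ)⁻¹ * (W * Wᵀ)) * C) * W := by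
          simp only [Matrix.mul_assoc]
      _ = _ := by rw [nonsing_inv_mul _ hGd, Matrix.mul_one, nonsing_inv_mul _ hCd, Matrix.mul_one]
  rw [hMB, hBM]
  refine ⟨?_, ?_, hPsymm, hPsymm⟩
  · rw [← Matrix.mul_assoc, ← Matrix.mul_assoc, hPW]
  · rw [← Matrix.mul_assoc, ← Matrix.mul_assoc, ← Matrix.mul_assoc, ← Matrix.mul_assoc, hPW]
end
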